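/- Let Δ be a complete fan in ℝ^n. For every flag τ₀ ⊊ τ₁ ⊊ ⋯ ⊊ τ_k in Δ, the set d_{(τ₀,…,τ_k)} is homeomorphic to a closed Euclidean ball of dimension k. Moreover, the union of the sets d_{(τ₀,…,τ_k)} over all flags in Δ is the whole closed unit ball B. -/

import Mathlib

open scoped RealInnerProductSpace

noncomputable section

abbrev Euc (n : ℕ) := EuclideanSpace ℝ (Fin n)

/-- A vector of `ℝ^n` has integral coordinates. -/
def IsIntegralVec {n : ℕ} (x : Euc n) : Prop := ∀ i, ∃ m : ℤ, x i = (m : ℝ)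

/-- A rational polyhedral cone in `ℝ^n`. -/
def IsRatPolyCone {n : ℕ} (σ : Set (Euc n)) : Prop :=
  ∃ (k : ℕ) (v : Fin k → Euc n), (∀ i, IsIntegralVec (v i)) ∧
    σ = {x | ∃ lam : Fin k → ℝ, (∀ i, 0 ≤ lam i) ∧ x = ∑ i, lam i • v i}

/-- Strict convexity of a cone: `σ ∩ (−σ) = {0}`. -/
def IsStrictlyConvexCone {n : ℕ} (σ : Set (Euc n)) : Prop := σ ∩ (-σ) = {0}

/-- The dual cone. -/
def dualCone {n : ℕ} (σ : Set (Euc n)) : Set (Euc n) := {u | ∀ x ∈ σ, 0 ≤ ⟪u, x⟫}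

/-- The orthogonal of a cone. -/
def orthCone {n : ℕ} (σ : Set (Euc n)) : Set (Euc n) := {u | ∀ x ∈ σ, ⟪u, x⟫ = 0}

/-- `τ` is a face of `σ`. -/
def IsFaceOf {n : ℕ} (τ σ : Set (Euc n)) : Prop :=
  ∃ u ∈ dualCone σ, τ = σ ∩ {x | ⟪u, x⟫ = 0}

/-- The dimension of a cone: the dimension of its linear span. -/
def coneDim {n : ℕ} (σ : Set (Euc n)) : ℕ := Module.finrank ℝ (Submodule.span ℝ σ)

/-- A fan in `ℝ^n`. -/
structure IsFan {n : ℕ} (Δ : Set (Set (Euc n))) : Prop where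
  finite : Δ.Finite
  poly : ∀ σ ∈ Δ, IsRatPolyCone σ
  strictconv : ∀ σ ∈ Δ, IsStrictlyConvexCone σ
  face_mem : ∀ σ ∈ Δ, ∀ τ, IsFaceOf τ σ → τ ∈ Δ
  inter_face : ∀ σ ∈ Δ, ∀ τ ∈ Δ, IsFaceOf (σ ∩ τ) σ ∧ IsFaceOf (σ ∩ τ) τ

/-- A complete fan: the union of the cones is everything. -/
def IsCompleteFan {n : ℕ} (Δ : Set (Set (Euc n))) : Prop :=
  IsFan Δ ∧ ⋃₀ Δ = Set.univ

/-- A flag `τ₀ ⊊ τ₁ ⊊ ⋯ ⊊ τ_k` of cones in the fan `Δ`, where each `τ_i`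
is a proper face of `τ_{i+1}`. -/
def IsFlag {n : ℕ} (Δ : Set (Set (Euc n))) {k : ℕ} (τ : Fin (k + 1) → Set (Euc n)) : Prop :=
  (∀ i, τ i ∈ Δ) ∧
    ∀ i : Fin k, IsFaceOf (τ i.castSucc) (τ i.succ) ∧ τ i.castSucc ≠ τ i.succ

/-- `v_σ`: the sum of the unit vectors `u_ρ` over the one-dimensional cones
`ρ ∈ Δ` that are faces of `σ`; here `u : Set (Euc n) → Euc n` is a choice of
the unit vector of each one-dimensional cone. -/
def vVec {n : ℕ} (Δ : Set (Set (Euc n))) (u : Set (Euc n) → Euc n)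
    (σ : Set (Euc n)) : Euc n :=
  ∑ᶠ ρ ∈ {ρ | ρ ∈ Δ ∧ IsFaceOf ρ σ ∧ coneDim ρ = 1}, u ρ

/-- The choice function `u` assigns to every one-dimensional cone of `Δ` the
unique unit vector it contains. -/
def IsUnitVecChoice {n : ℕ} (Δ : Set (Set (Euc n))) (u : Set (Euc n) → Euc n) : Prop :=
  ∀ ρ ∈ Δ, coneDim ρ = 1 → u ρ ∈ ρ ∧ ‖u ρ‖ = 1

/-- The cone generated by finitely many vectors `w₀, …, w_{m−1}`. -/
def coneOf {n m : ℕ} (w : Fin m → Euc n) : Set (Euc n) :=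
  {x | ∃ μ : Fin m → ℝ, (∀ i, 0 ≤ μ i) ∧ x = ∑ i, μ i • w i}

open scoped Classical in
/-- The cell `d_{(τ₀,…,τ_k)}` of the ball associated to a flag in `Δ`. -/
def dSet {n : ℕ} (Δ : Set (Set (Euc n))) (u : Set (Euc n) → Euc n)
    {k : ℕ} (τ : Fin (k + 1) → Set (Euc n)) : Set (Euc n) :=
  if τ 0 = ({0} : Set (Euc n)) then
    (if k = 0 then {0}
     else coneOf (fun i : Fin k => vVec Δ u (τ i.succ)) ∩ Metric.closedBall (0 : Euc n) 1)
  else coneOf (fun i => vVec Δ u (τ i)) ∩ Metric.sphere (0 : Euc n) 1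


/-! ### polyhedral part -/

def IsHCone {n : ℕ} (σ : Set (Euc n)) : Prop :=
  ∃ U : Finset (Euc n), ∀ x, x ∈ σ ↔ ∀ u ∈ U, 0 ≤ ⟪u, x⟫

open scoped Classical in
lemma fm_step {n : ℕ} (σ : Set (Euc n)) (h : IsHCone σ) (w : Euc n) :
    IsHCone {x | ∃ t : ℝ, 0 ≤ t ∧ x - t • w ∈ σ} := by
  obtain ⟨U, hU⟩ := h
  refine ⟨U.filter (fun u => 0 ≤ ⟪u, w⟫) ∪
    ((U.filter (fun u => 0 < ⟪u, w⟫)) ×ˢ (U.filter (fun u => ⟪u, w⟫ < 0))).image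
      (fun p => ⟪p.1, w⟫ • p.2 - ⟪p.2, w⟫ • p.1), fun x => ?_⟩
  have key : ∀ (t : ℝ) (a : Euc n), ⟪a, x - t • w⟫ = ⟪a, x⟫ - t * ⟪a, w⟫ := by
    intro t a; rw [inner_sub_right, real_inner_smul_right]
  have key2 : ∀ (a b : Euc n), ⟪(⟪a, w⟫ • b - ⟪b, w⟫ • a : Euc n), x⟫
      = ⟪a, w⟫ * ⟪b, x⟫ - ⟪b, w⟫ * ⟪a, x⟫ := by
    intro a b; rw [inner_sub_left, real_inner_smul_left, real_inner_smul_left]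
  constructor
  · rintro ⟨t, ht, hx⟩ a ha
    rw [hU] at hx
    rw [Finset.mem_union] at ha
    rcases ha with ha | ha
    · rw [Finset.mem_filter] at ha
      have := hx a ha.1
      rw [key] at this
      have := mul_nonneg ht ha.2
      linarith
    · rw [Finset.mem_image] at ha
      obtain ⟨⟨p, q⟩, hpq, rfl⟩ := ha
      simp only [Finset.mem_product, Finset.mem_filter] at hpq
      obtain ⟨⟨hp, hp'⟩, hq, hq'⟩ := hpq
      have h1 := hx p hp
      have h2 := hx q hq
      rw [key] at h1 h2
      simp only [key2]
      nlinarith [mul_nonneg hp'.le h2, mul_nonneg (neg_nonneg.2 hq'.le) h1]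
  · intro hx
    have hx1 : ∀ a ∈ U, 0 ≤ ⟪a, w⟫ → 0 ≤ ⟪a, x⟫ := fun a ha ha' =>
      hx a (Finset.mem_union_left _ (Finset.mem_filter.2 ⟨ha, ha'⟩))
    have hx2 : ∀ p ∈ U, ∀ q ∈ U, 0 < ⟪p, w⟫ → ⟪q, w⟫ < 0 →
        0 ≤ ⟪p, w⟫ * ⟪q, x⟫ - ⟪q, w⟫ * ⟪p, x⟫ := by
      intro p hp q hq hp' hq'
      rw [← key2]
      apply hx
      apply Finset.mem_union_right
      rw [Finset.mem_image]
      exact ⟨(p, q), by simp [hp, hq, hp', hq'], rfl⟩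
    -- the optimal parameter
    obtain ⟨t, ht0, htlow, htup⟩ : ∃ t : ℝ, 0 ≤ t ∧
        (∀ q ∈ U, ⟪q, w⟫ < 0 → ⟪q, x⟫ / ⟪q, w⟫ ≤ t) ∧
        (t = 0 ∨ ∃ q ∈ U, ⟪q, w⟫ < 0 ∧ t = ⟪q, x⟫ / ⟪q, w⟫) := by
      obtain ⟨m, hm, hmax⟩ := Finset.exists_max_image
        (insert 0 ((U.filter (fun u => ⟪u, w⟫ < 0)).image (fun q => ⟪q, x⟫ / ⟪q, w⟫)))
        (fun t : ℝ => t) ⟨0, Finset.mem_insert_self _ _⟩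
      refine ⟨m, hmax 0 (Finset.mem_insert_self _ _), fun q hq hq' => hmax _ ?_, ?_⟩
      · apply Finset.mem_insert_of_mem
        rw [Finset.mem_image]
        exact ⟨q, Finset.mem_filter.2 ⟨hq, hq'⟩, rfl⟩
      · rw [Finset.mem_insert, Finset.mem_image] at hm
        rcases hm with hm | ⟨q, hq, rfl⟩
        · exact Or.inl hm
        · rw [Finset.mem_filter] at hq
          exact Or.inr ⟨q, hq.1, hq.2, rfl⟩
    refine ⟨t, ht0, (hU _).2 fun a ha => ?_⟩
    rw [key]
    rcases lt_trichotomy ⟪a, w⟫ 0 with h | h | h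
    · have := htlow a ha h
      rw [div_le_iff_of_neg h] at this
      linarith
    · rw [h]; have := hx1 a ha h.ge; linarith
    · rcases htup with rfl | ⟨q, hq, hq', rfl⟩
      · have := hx1 a ha h.le; linarith
      · have h2 := hx2 a ha q hq h hq'
        have h3 : ⟪q, x⟫ / ⟪q, w⟫ * ⟪a, w⟫ = (⟪a, w⟫ * ⟪q, x⟫) / ⟪q, w⟫ := by ring
        rw [h3, sub_nonneg, div_le_iff_of_neg hq']
        linarith

open scoped Classical in
lemma isHCone_zero (n : ℕ) : IsHCone ({0} : Set (Euc n)) := by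
  refine ⟨Finset.univ.image (fun i : Fin n => EuclideanSpace.single i (1 : ℝ)) ∪
    Finset.univ.image (fun i : Fin n => - EuclideanSpace.single i (1 : ℝ)), fun x => ?_⟩
  constructor
  · rintro rfl u _; simp
  · intro h
    rw [Set.mem_singleton_iff]
    ext i
    have h1 := h (EuclideanSpace.single i (1 : ℝ)) (by simp)
    have h2 := h (- EuclideanSpace.single i (1 : ℝ)) (by simp)
    rw [inner_neg_left] at h2
    rw [EuclideanSpace.inner_single_left] at h1 h2
    simp at h1 h2 ⊢
    linarith

lemma isHCone_gen {n : ℕ} : ∀ (k : ℕ) (v : Fin k → Euc n),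
    IsHCone {x | ∃ lam : Fin k → ℝ, (∀ i, 0 ≤ lam i) ∧ x = ∑ i, lam i • v i} := by
  intro k
  induction k with
  | zero =>
    intro v
    convert isHCone_zero n using 1
    ext x
    simp
  | succ k ih =>
    intro v
    convert fm_step _ (ih (fun i => v i.succ)) (v 0) using 1
    ext x
    simp only [Set.mem_setOf_eq]
    constructor
    · rintro ⟨lam, h0, rfl⟩
      refine ⟨lam 0, h0 0, fun i => lam i.succ, fun i => h0 _, ?_⟩
      rw [Fin.sum_univ_succ]; abel
    · rintro ⟨t, ht, lam, h0, hx⟩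
      refine ⟨Fin.cons t lam, ?_, ?_⟩
      · intro i
        refine Fin.cases ?_ (fun j => ?_) i
        · simpa using ht
        · simpa using h0 j
      · rw [Fin.sum_univ_succ]
        simp only [Fin.cons_zero, Fin.cons_succ]
        rw [← hx]; abel

lemma IsRatPolyCone.isHCone {n : ℕ} {σ : Set (Euc n)} (h : IsRatPolyCone σ) : IsHCone σ := by
  obtain ⟨k, v, _, rfl⟩ := h
  exact isHCone_gen k v

lemma IsHCone.zero_mem {n : ℕ} {σ : Set (Euc n)} (h : IsHCone σ) : (0 : Euc n) ∈ σ := by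
  obtain ⟨U, hU⟩ := h
  rw [hU]; simp

lemma IsHCone.add_mem {n : ℕ} {σ : Set (Euc n)} (h : IsHCone σ) {x y : Euc n}
    (hx : x ∈ σ) (hy : y ∈ σ) : x + y ∈ σ := by
  obtain ⟨U, hU⟩ := h
  rw [hU] at *
  intro a ha
  rw [inner_add_right]
  exact add_nonneg (hx a ha) (hy a ha)

lemma IsHCone.smul_mem {n : ℕ} {σ : Set (Euc n)} (h : IsHCone σ) {x : Euc n} {c : ℝ}
    (hc : 0 ≤ c) (hx : x ∈ σ) : c • x ∈ σ := by
  obtain ⟨U, hU⟩ := h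
  rw [hU] at *
  intro a ha
  rw [real_inner_smul_right]
  exact mul_nonneg hc (hx a ha)

/-- Push `x` in direction `-w` until it hits a proper face. -/
lemma push_face {n : ℕ} {σ : Set (Euc n)} (h : IsHCone σ) (hs : IsStrictlyConvexCone σ)
    {x w : Euc n} (hx : x ∈ σ) (hw : w ∈ σ) (hw0 : w ≠ 0) :
    ∃ t : ℝ, 0 ≤ t ∧ ∃ a ∈ dualCone σ, x - t • w ∈ σ ∧ ⟪a, x - t • w⟫ = 0 ∧ 0 < ⟪a, w⟫ := by
  classical
  obtain ⟨U, hU⟩ := h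
  have hne : (U.filter (fun a => 0 < ⟪a, w⟫)).Nonempty := by
    by_contra hcon
    rw [Finset.not_nonempty_iff_eq_empty, Finset.filter_eq_empty_iff] at hcon
    apply hw0
    have : w ∈ σ ∩ (-σ) := by
      refine ⟨hw, ?_⟩
      rw [Set.mem_neg, hU]
      intro a ha
      rw [inner_neg_right]
      linarith [not_lt.1 (hcon ha)]
    rw [hs] at this
    exact this
  obtain ⟨a, ha, hmin⟩ := Finset.exists_min_image _ (fun a : Euc n => ⟪a, x⟫ / ⟪a, w⟫) hne
  rw [Finset.mem_filter] at ha
  have hxa := (hU x).1 hx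
  have hwa := (hU w).1 hw
  refine ⟨⟪a, x⟫ / ⟪a, w⟫, div_nonneg (hxa a ha.1) ha.2.le, a,
    fun y hy => (hU y).1 hy a ha.1, (hU _).2 ?_, ?_, ha.2⟩
  · intro b hb
    rw [inner_sub_right, real_inner_smul_right]
    rcases (hwa b hb).eq_or_lt with h | h
    · rw [← h]; simpa using hxa b hb
    · have := hmin b (Finset.mem_filter.2 ⟨hb, h⟩)
      rw [le_div_iff₀ h] at this
      linarith
  · rw [inner_sub_right, real_inner_smul_right, div_mul_cancel₀ _ ha.2.ne', sub_self]

lemma IsFaceOf.subset {n : ℕ} {τ σ : Set (Euc n)} (h : IsFaceOf τ σ) : τ ⊆ σ := by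
  obtain ⟨a, _, rfl⟩ := h
  exact Set.inter_subset_left

lemma IsFan.face_of_subset {n : ℕ} {Δ : Set (Set (Euc n))} (hΔ : IsFan Δ) {τ σ : Set (Euc n)}
    (hτ : τ ∈ Δ) (hσ : σ ∈ Δ) (h : τ ⊆ σ) : IsFaceOf τ σ := by
  have := (hΔ.inter_face σ hσ τ hτ).1
  rwa [Set.inter_eq_self_of_subset_right h] at this

/-- Version of `push_face` inside a fan. -/
lemma IsFan.push {n : ℕ} {Δ : Set (Set (Euc n))} (hΔ : IsFan Δ) {σ : Set (Euc n)}
    (hσ : σ ∈ Δ) {x w : Euc n} (hx : x ∈ σ) (hw : w ∈ σ) (hw0 : w ≠ 0) :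
    ∃ t : ℝ, 0 ≤ t ∧ ∃ τ ∈ Δ, τ ⊂ σ ∧ x - t • w ∈ τ := by
  obtain ⟨t, ht, a, ha, h1, h2, h3⟩ :=
    push_face (hΔ.poly σ hσ).isHCone (hΔ.strictconv σ hσ) hx hw hw0
  refine ⟨t, ht, σ ∩ {x | ⟪a, x⟫ = 0}, hΔ.face_mem σ hσ _ ⟨a, ha, rfl⟩, ?_, h1, h2⟩
  refine ⟨Set.inter_subset_left, fun h => ?_⟩
  exact h3.ne' (h hw).2

lemma IsFan.induct {n : ℕ} {Δ : Set (Set (Euc n))} (hΔ : IsFan Δ) {P : Set (Euc n) → Prop}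
    (hP : ∀ σ ∈ Δ, (∀ τ ∈ Δ, τ ⊂ σ → P τ) → P σ) {σ : Set (Euc n)} (hσ : σ ∈ Δ) : P σ :=
  (hΔ.finite.wellFoundedOn (r := fun a b : Set (Euc n) => a ⊂ b)).induction hσ hP

lemma IsFan.eq_zero_or {n : ℕ} {Δ : Set (Set (Euc n))} (hΔ : IsFan Δ) {σ : Set (Euc n)}
    (hσ : σ ∈ Δ) : σ = {0} ∨ ∃ w ∈ σ, w ≠ 0 := by
  by_cases h : ∃ w ∈ σ, w ≠ 0
  · exact Or.inr h
  · left
    push Not at h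
    exact Set.eq_singleton_iff_unique_mem.2 ⟨(hΔ.poly σ hσ).isHCone.zero_mem, h⟩

lemma IsFan.zero_mem {n : ℕ} {Δ : Set (Set (Euc n))} (hΔ : IsFan Δ) {σ : Set (Euc n)}
    (hσ : σ ∈ Δ) : {0} ∈ Δ := by
  refine hΔ.induct (P := fun _ => {0} ∈ Δ) ?_ hσ
  intro σ hσ ih
  rcases hΔ.eq_zero_or hσ with rfl | ⟨w, hw, hw0⟩
  · exact hσ
  · obtain ⟨t, _, τ, hτ, hτσ, _⟩ := hΔ.push hσ hw hw hw0
    exact ih τ hτ hτσ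

lemma coneDim_one {n : ℕ} {Δ : Set (Set (Euc n))} (hΔ : IsFan Δ) {u : Set (Euc n) → Euc n}
    (hu : IsUnitVecChoice Δ u) {σ : Set (Euc n)} (hσ : σ ∈ Δ) (h1 : coneDim σ = 1)
    {x : Euc n} (hx : x ∈ σ) : ∃ c : ℝ, x = c • u σ := by
  obtain ⟨hm, hn⟩ := hu σ hσ h1
  have hne : (⟨u σ, Submodule.subset_span hm⟩ : Submodule.span ℝ σ) ≠ 0 := by
    intro h
    have : u σ = 0 := congrArg Subtype.val h
    rw [this] at hn; simp at hn
  obtain ⟨c, hc⟩ := (finrank_eq_one_iff_of_nonzero' _ hne).1 h1 ⟨x, Submodule.subset_span hx⟩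
  exact ⟨c, (congrArg Subtype.val hc).symm⟩

lemma rays_span {n : ℕ} {Δ : Set (Set (Euc n))} (hΔ : IsFan Δ) {u : Set (Euc n) → Euc n}
    (hu : IsUnitVecChoice Δ u) (a : Euc n) {σ : Set (Euc n)} (hσ : σ ∈ Δ) :
    (∀ ρ ∈ Δ, ρ ⊆ σ → coneDim ρ = 1 → ⟪a, u ρ⟫ = 0) → ∀ x ∈ σ, ⟪a, x⟫ = 0 := by
  refine hΔ.induct (P := fun σ => (∀ ρ ∈ Δ, ρ ⊆ σ → coneDim ρ = 1 → ⟪a, u ρ⟫ = 0) →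
    ∀ x ∈ σ, ⟪a, x⟫ = 0) ?_ hσ
  intro σ hσ ih hρ
  have ih' : ∀ τ ∈ Δ, τ ⊂ σ → ∀ x ∈ τ, ⟪a, x⟫ = 0 := fun τ hτ hτσ =>
    ih τ hτ hτσ fun ρ h1 h2 h3 => hρ ρ h1 (h2.trans hτσ.1) h3
  by_cases h2 : ∃ w ∈ σ, w ≠ 0 ∧ ∃ z ∈ σ, ∀ c : ℝ, z ≠ c • w
  · obtain ⟨w, hw, hw0, z, hz, hzw⟩ := h2
    obtain ⟨t, ht, τ, hτ, hτσ, hy⟩ := hΔ.push hσ hz hw hw0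
    have hy0 : z - t • w ≠ 0 := sub_ne_zero.2 (hzw t)
    intro x hx
    obtain ⟨s, hs, τ', hτ', hτσ', hy'⟩ := hΔ.push hσ hx (hτσ.1 hy) hy0
    have e1 := ih' τ hτ hτσ _ hy
    have e2 := ih' τ' hτ' hτσ' _ hy'
    rw [inner_sub_right, real_inner_smul_right, e1] at e2
    linarith
  · push Not at h2
    rcases hΔ.eq_zero_or hσ with rfl | ⟨w, hw, hw0⟩
    · rintro x rfl; simp
    · have hspan : Submodule.span ℝ σ = Submodule.span ℝ {w} := by
        apply le_antisymm
        · rw [Submodule.span_le]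
          intro z hz
          obtain ⟨c, rfl⟩ := h2 w hw hw0 z hz
          exact Submodule.smul_mem _ _ (Submodule.mem_span_singleton_self w)
        · exact Submodule.span_mono (by simpa using hw)
      have h1 : coneDim σ = 1 := by
        rw [coneDim, hspan, finrank_span_singleton hw0]
      intro x hx
      obtain ⟨c, rfl⟩ := coneDim_one hΔ hu hσ h1 hx
      rw [real_inner_smul_right, hρ σ hσ subset_rfl h1, mul_zero]

lemma vVec_finite {n : ℕ} {Δ : Set (Set (Euc n))} (hΔ : IsFan Δ) (σ : Set (Euc n)) :
    {ρ | ρ ∈ Δ ∧ IsFaceOf ρ σ ∧ coneDim ρ = 1}.Finite :=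
  hΔ.finite.subset fun _ h => h.1

lemma vVec_mem {n : ℕ} {Δ : Set (Set (Euc n))} (hΔ : IsFan Δ) {u : Set (Euc n) → Euc n}
    (hu : IsUnitVecChoice Δ u) {σ : Set (Euc n)} (hσ : σ ∈ Δ) : vVec Δ u σ ∈ σ := by
  have hc := (hΔ.poly σ hσ).isHCone
  rw [vVec]
  refine finsum_mem_induction (fun x => x ∈ σ) hc.zero_mem (fun x y hx hy => hc.add_mem hx hy) ?_
  rintro ρ ⟨h1, h2, h3⟩
  exact h2.subset (hu ρ h1 h3).1

lemma vVec_not_face {n : ℕ} {Δ : Set (Set (Euc n))} (hΔ : IsFan Δ) {u : Set (Euc n) → Euc n}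
    (hu : IsUnitVecChoice Δ u) {σ : Set (Euc n)} (hσ : σ ∈ Δ) {a : Euc n} (ha : a ∈ dualCone σ)
    (h0 : ⟪a, vVec Δ u σ⟫ = 0) : ∀ x ∈ σ, ⟪a, x⟫ = 0 := by
  apply rays_span hΔ hu a hσ
  rw [vVec, finsum_mem_eq_finite_toFinset_sum _ (vVec_finite hΔ σ), inner_sum,
    Finset.sum_eq_zero_iff_of_nonneg] at h0
  · intro ρ h1 h2 h3
    exact h0 ρ ((vVec_finite hΔ σ).mem_toFinset.2 ⟨h1, hΔ.face_of_subset h1 hσ h2, h3⟩)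
  · intro ρ hρ
    obtain ⟨h1, h2, h3⟩ := (vVec_finite hΔ σ).mem_toFinset.1 hρ
    exact ha _ (h2.subset (hu ρ h1 h3).1)

/-- `v_σ` is not annihilated by a functional cutting out a proper face. -/
lemma vVec_sep {n : ℕ} {Δ : Set (Set (Euc n))} (hΔ : IsFan Δ) {u : Set (Euc n) → Euc n}
    (hu : IsUnitVecChoice Δ u) {τ σ : Set (Euc n)} (hσ : σ ∈ Δ) (hτ : τ ∈ Δ) (h : τ ⊂ σ) :
    ∃ a : Euc n, (∀ x ∈ τ, ⟪a, x⟫ = 0) ∧ ⟪a, vVec Δ u σ⟫ ≠ 0 := by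
  obtain ⟨a, ha, hτa⟩ := hΔ.face_of_subset hτ hσ h.1
  refine ⟨a, fun x hx => ?_, fun h0 => h.2 ?_⟩
  · rw [hτa] at hx; exact hx.2
  · intro x hx
    rw [hτa]
    exact ⟨hx, vVec_not_face hΔ hu hσ ha h0 x hx⟩

lemma vVec_ne_zero {n : ℕ} {Δ : Set (Set (Euc n))} (hΔ : IsFan Δ) {u : Set (Euc n) → Euc n}
    (hu : IsUnitVecChoice Δ u) {σ : Set (Euc n)} (hσ : σ ∈ Δ) (h : σ ≠ {0}) :
    vVec Δ u σ ≠ 0 := by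
  have hs : ({0} : Set (Euc n)) ⊂ σ := by
    refine HasSubset.Subset.ssubset_of_ne ?_ h.symm
    simpa using (hΔ.poly σ hσ).isHCone.zero_mem
  obtain ⟨a, _, ha⟩ := vVec_sep hΔ hu hσ (hΔ.zero_mem hσ) hs
  intro h0
  rw [h0] at ha; simp at ha

lemma chain_linInd {n : ℕ} {Δ : Set (Set (Euc n))} (hΔ : IsFan Δ) {u : Set (Euc n) → Euc n}
    (hu : IsUnitVecChoice Δ u) : ∀ (m : ℕ) (τ : Fin m → Set (Euc n)), (∀ i, τ i ∈ Δ) →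
    (∀ i, τ i ≠ {0}) → StrictMono τ → LinearIndependent ℝ (fun i => vVec Δ u (τ i)) := by
  intro m
  induction m with
  | zero => intro τ _ _ _; exact linearIndependent_empty_type
  | succ m ih =>
    intro τ hτ h0 hm
    rw [linearIndependent_finSucc']
    refine ⟨ih (fun i => τ i.castSucc) (fun i => hτ _) (fun i => h0 _)
      (hm.comp Fin.strictMono_castSucc), ?_⟩
    cases m with
    | zero =>
      have : Set.range (Fin.init fun i => vVec Δ u (τ i)) = ∅ := Set.range_eq_empty _
      rw [this, Submodule.span_empty, Submodule.mem_bot]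
      exact vVec_ne_zero hΔ hu (hτ _) (h0 _)
    | succ m =>
      obtain ⟨a, ha, hne⟩ := vVec_sep hΔ hu (hτ (Fin.last (m + 1)))
        (hτ (Fin.last m).castSucc) (hm (Fin.castSucc_lt_last _))
      intro hmem
      apply hne
      have hle : Submodule.span ℝ (Set.range (Fin.init fun i => vVec Δ u (τ i)))
          ≤ LinearMap.ker (innerₛₗ ℝ a) := by
        rw [Submodule.span_le]
        rintro _ ⟨i, rfl⟩
        simp only [SetLike.mem_coe, LinearMap.mem_ker, innerₛₗ_apply_apply, Fin.init]
        apply ha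
        have : τ i.castSucc ⊆ τ (Fin.last m).castSucc :=
          hm.monotone (Fin.castSucc_le_castSucc_iff.2 (Fin.le_last i))
        exact this (vVec_mem hΔ hu (hτ _))
      have := hle hmem
      simpa using this

lemma IsFlag.strictMono {n : ℕ} {Δ : Set (Set (Euc n))} {k : ℕ} {τ : Fin (k + 1) → Set (Euc n)}
    (h : IsFlag Δ τ) : StrictMono τ := by
  rw [Fin.strictMono_iff_lt_succ]
  intro i
  exact HasSubset.Subset.ssubset_of_ne (h.2 i).1.subset (h.2 i).2

lemma exists_flag {n : ℕ} {Δ : Set (Set (Euc n))} (hΔ : IsFan Δ) {u : Set (Euc n) → Euc n}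
    (hu : IsUnitVecChoice Δ u) {σ : Set (Euc n)} (hσ : σ ∈ Δ) :
    ∀ x ∈ σ, ∃ (k : ℕ) (τ : Fin (k + 1) → Set (Euc n)), IsFlag Δ τ ∧ τ 0 = {0} ∧
      τ (Fin.last k) ⊆ σ ∧ x ∈ coneOf (fun i : Fin k => vVec Δ u (τ i.succ)) := by
  refine hΔ.induct (P := fun σ => ∀ x ∈ σ, ∃ (k : ℕ) (τ : Fin (k + 1) → Set (Euc n)),
    IsFlag Δ τ ∧ τ 0 = {0} ∧ τ (Fin.last k) ⊆ σ ∧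
      x ∈ coneOf (fun i : Fin k => vVec Δ u (τ i.succ))) ?_ hσ
  intro σ hσ ih x hx
  by_cases h0 : σ = {0}
  · refine ⟨0, fun _ => {0}, ⟨fun _ => h0 ▸ hσ, fun i => i.elim0⟩, rfl, h0.ge, ?_⟩
    rw [h0] at hx
    exact ⟨fun _ => 0, fun _ => le_rfl, by simpa using hx⟩
  · obtain ⟨t, ht, τ, hτ, hτσ, hy⟩ :=
      hΔ.push hσ hx (vVec_mem hΔ hu hσ) (vVec_ne_zero hΔ hu hσ h0)
    obtain ⟨k, f, hf, hf0, hfl, μ, hμ, hxμ⟩ := ih τ hτ hτσ _ hy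
    have hlast : f (Fin.last k) ⊂ σ := hfl.trans_ssubset hτσ
    refine ⟨k + 1, Fin.snoc f σ, ⟨?_, ?_⟩, ?_, ?_, Fin.snoc μ t, ?_, ?_⟩
    · intro i
      refine Fin.lastCases ?_ (fun j => ?_) i
      · simpa using hσ
      · simpa using hf.1 j
    · intro i
      refine Fin.lastCases ?_ (fun j => ?_) i
      · rw [Fin.succ_last, Fin.snoc_last, Fin.snoc_castSucc]
        exact ⟨hΔ.face_of_subset (hf.1 _) hσ hlast.1, hlast.ne⟩
      · rw [Fin.succ_castSucc, Fin.snoc_castSucc, Fin.snoc_castSucc]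
        exact hf.2 j
    · rw [← Fin.castSucc_zero, Fin.snoc_castSucc, hf0]
    · rw [Fin.snoc_last]
    · intro i
      refine Fin.lastCases ?_ (fun j => ?_) i
      · simpa using ht
      · simpa using hμ j
    · rw [Fin.sum_univ_castSucc]
      simp only [Fin.snoc_castSucc, Fin.snoc_last, Fin.succ_castSucc, Fin.succ_last]
      rw [← hxμ]; abel

/-! ### topological part -/

lemma homeo_ball {k n : ℕ} {s : Set (Euc k)} (hs : IsCompact s) (hc : Convex ℝ s)
    (hi : (interior s).Nonempty) (g : Euc k → Euc n) (hg : ContinuousOn g s)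
    (hinj : Set.InjOn g s) {t : Set (Euc n)} (ht : g '' s = t) :
    Nonempty (t ≃ₜ (Metric.closedBall (0 : Euc k) 1 : Set (Euc k))) := by
  obtain ⟨e, _, he, _⟩ :=
    exists_homeomorph_image_interior_closure_frontier_eq_unitBall hc hi hs.isBounded
  rw [hs.isClosed.closure_eq] at he
  have e1 : s ≃ₜ (Metric.closedBall (0 : Euc k) 1 : Set (Euc k)) :=
    (e.image s).trans (Homeomorph.setCongr he)
  haveI : CompactSpace s := isCompact_iff_compactSpace.1 hs
  have hcont : Continuous (Set.BijOn.equiv g (hinj.bijOn_image)) := by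
    apply Continuous.subtype_mk
    exact hg.restrict
  have e2 : s ≃ₜ (g '' s) := hcont.homeoOfEquivCompactToT2
  exact ⟨((Homeomorph.setCongr ht.symm).trans e2.symm).trans e1⟩

lemma ball_cell {k n : ℕ} (w : Fin k → Euc n) (hw : LinearIndependent ℝ w) :
    Nonempty ((coneOf w ∩ Metric.closedBall (0 : Euc n) 1 : Set (Euc n)) ≃ₜ
      (Metric.closedBall (0 : Euc k) 1 : Set (Euc k))) := by
  set L : Euc k →ₗ[ℝ] Euc n :=
    (Fintype.linearCombination ℝ w).comp (WithLp.linearEquiv 2 ℝ (Fin k → ℝ)).toLinearMap with hL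
  have hLa : ∀ x, L x = ∑ i, x i • w i := fun x => by
    simp [hL, Fintype.linearCombination_apply]
  have hinj : Function.Injective L := by
    rw [← LinearMap.ker_eq_bot, LinearMap.ker_eq_bot']
    intro x hx
    rw [hLa] at hx
    ext i
    exact Fintype.linearIndependent_iff.1 hw _ hx i
  have hemb : Topology.IsClosedEmbedding L :=
    LinearMap.isClosedEmbedding_of_injective (LinearMap.ker_eq_bot.2 hinj)
  have hcl : IsClosed {x : Euc k | ∀ i, 0 ≤ x i} := by
    simp only [Set.setOf_forall]
    exact isClosed_iInter fun i => isClosed_le continuous_const (by fun_prop)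
  refine homeo_ball (s := {x : Euc k | ∀ i, 0 ≤ x i} ∩ L ⁻¹' Metric.closedBall 0 1)
    ?_ ?_ ?_ L hemb.continuous.continuousOn hinj.injOn ?_
  · exact (hemb.isCompact_preimage (isCompact_closedBall _ _)).inter_left hcl
  · refine Convex.inter ?_ ((convex_closedBall _ _).linear_preimage L)
    intro x hx y hy a b ha hb _ i
    simp only [PiLp.add_apply, PiLp.smul_apply, smul_eq_mul]
    exact add_nonneg (mul_nonneg ha (hx i)) (mul_nonneg hb (hy i))
  · have hopen : IsOpen ({x : Euc k | ∀ i, 0 < x i} ∩ L ⁻¹' Metric.ball 0 1) := by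
      refine IsOpen.inter ?_ (Metric.isOpen_ball.preimage hemb.continuous)
      simp only [Set.setOf_forall]
      exact isOpen_iInter_of_finite fun i => isOpen_lt continuous_const (by fun_prop)
    have hsub : ({x : Euc k | ∀ i, 0 < x i} ∩ L ⁻¹' Metric.ball 0 1) ⊆
        {x : Euc k | ∀ i, 0 ≤ x i} ∩ L ⁻¹' Metric.closedBall 0 1 :=
      fun x hx => ⟨fun i => (hx.1 i).le, Metric.ball_subset_closedBall hx.2⟩
    refine Set.Nonempty.mono (interior_maximal hsub hopen) ?_
    set e : Euc k := WithLp.toLp 2 (fun _ => (1 : ℝ))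
    have hpos : 0 < ‖L e‖ + 1 := by positivity
    refine ⟨(‖L e‖ + 1)⁻¹ • e, fun i => ?_, ?_⟩
    · simp [e]; positivity
    · simp only [Set.mem_preimage, map_smul, mem_ball_zero_iff, norm_smul, norm_inv,
        Real.norm_of_nonneg hpos.le]
      rw [inv_mul_lt_iff₀ hpos]; linarith
  · ext y
    constructor
    · rintro ⟨x, ⟨hx, hx1⟩, rfl⟩
      exact ⟨⟨fun i => x i, hx, hLa x⟩, hx1⟩
    · rintro ⟨⟨μ, hμ, rfl⟩, h1⟩
      have : L (WithLp.toLp 2 μ) = ∑ i, μ i • w i := by rw [hLa]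
      exact ⟨WithLp.toLp 2 μ, ⟨hμ, by rw [Set.mem_preimage, this]; exact h1⟩, this⟩

lemma sphere_cell {k n : ℕ} (w : Fin (k + 1) → Euc n) (hw : LinearIndependent ℝ w) :
    Nonempty ((coneOf w ∩ Metric.sphere (0 : Euc n) 1 : Set (Euc n)) ≃ₜ
      (Metric.closedBall (0 : Euc k) 1 : Set (Euc k))) := by
  set A : Euc k → Euc n := fun x => (1 - ∑ i, x i) • w 0 + ∑ i, x i • w i.succ with hA
  have hAcont : Continuous A := by fun_prop
  have hli : ∀ (c : ℝ) (x : Fin k → ℝ), c • w 0 + ∑ i, x i • w i.succ = 0 →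
      c = 0 ∧ ∀ i, x i = 0 := by
    intro c x h
    have := Fintype.linearIndependent_iff.1 hw (Fin.cons c x)
      (by rw [Fin.sum_univ_succ]; simpa using h)
    exact ⟨by simpa using this 0, fun i => by simpa using this i.succ⟩
  have hA0 : ∀ x, A x ≠ 0 := by
    intro x hx
    obtain ⟨h1, h2⟩ := hli _ _ hx
    simp [h2] at h1
  have hAinj : ∀ (c d : ℝ) (x y : Euc k), c ≠ 0 → c • A x = d • A y → x = y := by
    intro c d x y hc h
    have h' : (c * (1 - ∑ i, x i) - d * (1 - ∑ i, y i)) • w 0 +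
        ∑ i, (c * x i - d * y i) • w i.succ = 0 := by
      rw [← sub_eq_zero] at h
      rw [← h]
      simp only [hA, sub_smul, mul_smul, Finset.sum_sub_distrib, smul_add, smul_sub,
        Finset.smul_sum]
      abel
    obtain ⟨h1, h2⟩ := hli _ _ h'
    have h3 : c * ∑ i, x i - d * ∑ i, y i = 0 := by
      rw [Finset.mul_sum, Finset.mul_sum, ← Finset.sum_sub_distrib]
      exact Finset.sum_eq_zero fun i _ => h2 i
    have hcd : c = d := by linarith
    subst hcd
    ext i
    have := h2 i
    rw [← mul_sub] at this
    rcases mul_eq_zero.1 this with h | h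
    · exact absurd h hc
    · linarith
  have hcl : IsClosed {x : Euc k | (∀ i, 0 ≤ x i) ∧ ∑ i, x i ≤ 1} := by
    rw [Set.setOf_and]
    refine IsClosed.inter ?_ (isClosed_le (by fun_prop) continuous_const)
    simp only [Set.setOf_forall]
    exact isClosed_iInter fun i => isClosed_le continuous_const (by fun_prop)
  refine homeo_ball (s := {x : Euc k | (∀ i, 0 ≤ x i) ∧ ∑ i, x i ≤ 1})
    ?_ ?_ ?_ (fun x => ‖A x‖⁻¹ • A x) ?_ ?_ ?_
  · refine Metric.isCompact_of_isClosed_isBounded hcl ?_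
    refine (Metric.isBounded_closedBall (x := (0 : Euc k)) (r := Real.sqrt k)).subset ?_
    rintro x ⟨h1, h2⟩
    rw [mem_closedBall_zero_iff, EuclideanSpace.norm_eq]
    apply Real.sqrt_le_sqrt
    have : ∀ i ∈ Finset.univ, ‖x i‖ ^ 2 ≤ (1 : ℝ) := by
      intro i _
      have h3 : x i ≤ ∑ j, x j := Finset.single_le_sum (fun j _ => h1 j) (Finset.mem_univ i)
      rw [Real.norm_of_nonneg (h1 i)]
      exact pow_le_one₀ (h1 i) (h3.trans h2)
    simpa using Finset.sum_le_sum this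
  · rintro x ⟨hx, hx'⟩ y ⟨hy, hy'⟩ a b ha hb hab
    simp only [Set.mem_setOf_eq, PiLp.add_apply, PiLp.smul_apply, smul_eq_mul]
    refine ⟨fun i => add_nonneg (mul_nonneg ha (hx i)) (mul_nonneg hb (hy i)), ?_⟩
    rw [Finset.sum_add_distrib, ← Finset.mul_sum, ← Finset.mul_sum]
    nlinarith
  · have hopen : IsOpen {x : Euc k | (∀ i, 0 < x i) ∧ ∑ i, x i < 1} := by
      rw [Set.setOf_and]
      refine IsOpen.inter ?_ (isOpen_lt (by fun_prop) continuous_const)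
      simp only [Set.setOf_forall]
      exact isOpen_iInter_of_finite fun i => isOpen_lt continuous_const (by fun_prop)
    have hsub : {x : Euc k | (∀ i, 0 < x i) ∧ ∑ i, x i < 1} ⊆
        {x : Euc k | (∀ i, 0 ≤ x i) ∧ ∑ i, x i ≤ 1} :=
      fun x hx => ⟨fun i => (hx.1 i).le, hx.2.le⟩
    refine Set.Nonempty.mono (interior_maximal hsub hopen) ?_
    have hpos : (0 : ℝ) < k + 1 := by positivity
    refine ⟨WithLp.toLp 2 (fun _ => ((k : ℝ) + 1)⁻¹), fun i => ?_, ?_⟩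
    · simp; positivity
    · simp
      rw [← div_eq_mul_inv, div_lt_one hpos]; linarith
  · refine Continuous.continuousOn ?_
    exact (hAcont.norm.inv₀ fun x => norm_ne_zero_iff.2 (hA0 x)).smul hAcont
  · intro x _ y _ h
    exact hAinj _ _ x y (inv_ne_zero (norm_ne_zero_iff.2 (hA0 x))) h
  · ext y
    constructor
    · rintro ⟨x, ⟨hx, hx1⟩, rfl⟩
      refine ⟨⟨fun i => ‖A x‖⁻¹ * (Fin.cons (1 - ∑ i, x i) (fun i => x i) : Fin (k + 1) → ℝ) i,
        fun i => mul_nonneg (by positivity) ?_, ?_⟩, ?_⟩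
      · refine Fin.cases ?_ (fun j => ?_) i
        · simpa using hx1
        · simpa using hx j
      · simp only [mul_smul, ← Finset.smul_sum]
        rw [Fin.sum_univ_succ]
        simp [hA]
      · rw [mem_sphere_zero_iff_norm, norm_smul, norm_inv, norm_norm,
          inv_mul_cancel₀ (norm_ne_zero_iff.2 (hA0 x))]
    · rintro ⟨⟨μ, hμ, hy⟩, h1⟩
      rw [mem_sphere_zero_iff_norm] at h1
      set S := ∑ i, μ i with hS
      have hS0 : 0 < S := by
        refine lt_of_le_of_ne (Finset.sum_nonneg fun i _ => hμ i) fun h => ?_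
        have h' := (Finset.sum_eq_zero_iff_of_nonneg (fun i _ => hμ i)).1 h.symm
        have : y = 0 := by
          rw [hy]; exact Finset.sum_eq_zero fun i hi => by rw [h' i hi, zero_smul]
        rw [this] at h1; simp at h1
      have hsum : ∑ i : Fin k, S⁻¹ * μ i.succ = 1 - S⁻¹ * μ 0 := by
        rw [← Finset.mul_sum, eq_sub_iff_add_eq, ← mul_add, add_comm, ← Fin.sum_univ_succ]
        exact inv_mul_cancel₀ hS0.ne'
      have hAy : A (WithLp.toLp 2 (fun i : Fin k => S⁻¹ * μ i.succ)) = S⁻¹ • y := by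
        simp only [hA, hsum]
        rw [hy, Fin.sum_univ_succ, smul_add, Finset.smul_sum]
        simp only [mul_smul, sub_sub_cancel]
      refine ⟨WithLp.toLp 2 (fun i : Fin k => S⁻¹ * μ i.succ), ⟨fun i => ?_, ?_⟩, ?_⟩
      · exact mul_nonneg (inv_nonneg.2 hS0.le) (hμ _)
      · have : 0 ≤ S⁻¹ * μ 0 := mul_nonneg (inv_nonneg.2 hS0.le) (hμ _)
        simp only [hsum]; linarith
      · simp only [hAy]
        rw [norm_smul, h1, mul_one, norm_inv, Real.norm_of_nonneg hS0.le, inv_inv, smul_smul,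
          mul_inv_cancel₀ hS0.ne', one_smul]

lemma coneOf_fin_zero {n : ℕ} (w : Fin 0 → Euc n) :
    coneOf w ∩ Metric.closedBall (0 : Euc n) 1 = {0} := by
  ext x
  simp only [coneOf, Set.mem_inter_iff, Set.mem_setOf_eq, Set.mem_singleton_iff]
  constructor
  · rintro ⟨⟨μ, _, h⟩, _⟩; simpa using h
  · rintro rfl; exact ⟨⟨fun _ => 0, fun _ => le_rfl, by simp⟩, by simp⟩

lemma dSet_zero {n : ℕ} (Δ : Set (Set (Euc n))) (u : Set (Euc n) → Euc n)
    {k : ℕ} (τ : Fin (k + 1) → Set (Euc n)) (h : τ 0 = {0}) : dSet Δ u τ =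
      coneOf (fun i : Fin k => vVec Δ u (τ i.succ)) ∩ Metric.closedBall (0 : Euc n) 1 := by
  rw [dSet, if_pos h]
  split_ifs with hk
  · subst hk; rw [coneOf_fin_zero]
  · rfl

/-- For a complete fan `Δ` in `ℝ^n`, each cell
`d_{(τ₀,…,τ_k)}` associated to a flag of `Δ` is homeomorphic to a closed
Euclidean ball of dimension `k`, and the union of these cells over all flags
is the whole closed unit ball `B`. -/
theorem flag_cells_decompose_ball {n : ℕ}
    (Δ : Set (Set (Euc n))) (hΔ : IsCompleteFan Δ)
    (u : Set (Euc n) → Euc n) (hu : IsUnitVecChoice Δ u) :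
    (∀ (k : ℕ) (τ : Fin (k + 1) → Set (Euc n)), IsFlag Δ τ →
      Nonempty ((dSet Δ u τ : Set (Euc n)) ≃ₜ
        (Metric.closedBall (0 : Euc k) 1 : Set (Euc k)))) ∧
    (⋃ (k : ℕ) (τ : Fin (k + 1) → Set (Euc n)) (_ : IsFlag Δ τ), dSet Δ u τ) =
      Metric.closedBall (0 : Euc n) 1 := by
  have hF := hΔ.1
  constructor
  · intro k τ hτ
    have hmono := hτ.strictMono
    by_cases h0 : τ 0 = {0}
    · rw [dSet_zero Δ u τ h0]
      apply ball_cell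
      refine chain_linInd hF hu k (fun i => τ i.succ) (fun i => hτ.1 _) (fun i hi => ?_)
        (hmono.comp Fin.strictMono_succ)
      have := hmono (Fin.succ_pos i)
      rw [h0, hi] at this
      exact this.2 subset_rfl
    · rw [dSet, if_neg h0]
      apply sphere_cell
      refine chain_linInd hF hu (k + 1) τ hτ.1 (fun i hi => h0 ?_) hmono
      have h1 : τ 0 ⊆ {0} := hi ▸ hmono.monotone (Fin.zero_le i)
      exact h1.antisymm (by simpa using (hF.poly _ (hτ.1 0)).isHCone.zero_mem)
  · apply Set.Subset.antisymm
    · refine Set.iUnion_subset fun k => Set.iUnion_subset fun τ => Set.iUnion_subset fun hτ => ?_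
      by_cases h0 : τ 0 = {0}
      · rw [dSet_zero Δ u τ h0]
        exact Set.inter_subset_right
      · rw [dSet, if_neg h0]
        exact Set.inter_subset_right.trans Metric.sphere_subset_closedBall
    · intro x hx
      have hxu : x ∈ ⋃₀ Δ := by rw [hΔ.2]; trivial
      obtain ⟨σ, hσ, hxσ⟩ := hxu
      obtain ⟨k, τ, hτ, h0, _, hxc⟩ := exists_flag hF hu hσ x hxσ
      refine Set.mem_iUnion.2 ⟨k, Set.mem_iUnion.2 ⟨τ, Set.mem_iUnion.2 ⟨hτ, ?_⟩⟩⟩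
      rw [dSet_zero Δ u τ h0]
      exact ⟨hxc, hx⟩

end
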